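/- Let A be a d_A×d_m real matrix with rows a_1',…,a_{d_A}', B a d_B×d_m real matrix, g ∈ ℝ^{d_A}, and h ∈ ℝ^{d_B}, with poly(A,g) nonempty and poly(A,g) ⊆ poly(B,h). Then for every x ∈ ℝ^{d_m} and every admissible choice of the reference index in each definition, τ(x;A,g) = τ(x;[A;B],[g;h]). -/

import Mathlib

/-!
The quantity `τ` has a description that only mentions the set `P = poly(A, g)`, the point `μ*` and
the unit vector `u` in the direction of the reference row: for real `t ≥ 0`, `t ≤ τ` holds iff the
closed ball of radius `t` centred at `μ* - t u`, which touches `μ*`, is contained in `P`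
(`ofReal_le_tauFrom_iff`). Indeed the largest value of `⟪a, ·⟫` on that ball is
`⟪a, μ*⟫ + t (‖a‖ - ⟪u, a⟫)`.

If such a ball with `t > 0` lies in `P`, its tangent hyperplane at `μ*` is the only supporting
hyperplane of `P` there, so every nonzero active row of every system describing `P` has direction
`u`. Hence `τ` depends on `P` and `μ*` only (`tauFrom_le_of_polyR_eq`). Likewise a nonzero active
row exists iff `μ*` is not interior to `P` (`exists_active_iff`). As stacking `B` under `A` does not
change the polyhedron, both claims follow.
-/

open scoped RealInnerProductSpace ENNReal

noncomputable section

/-- The polyhedron `{x : ⟪A j, x⟫ ≤ g j for all j}`. -/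
def polyR {ι : Type*} {m : ℕ} (A : ι → EuclideanSpace ℝ (Fin m)) (g : ι → ℝ) :
    Set (EuclideanSpace ℝ (Fin m)) :=
  {x | ∀ j, ⟪A j, x⟫ ≤ g j}

/-- `μ` is the Euclidean metric projection of `x` onto the set `s`. -/
def IsProjOn {m : ℕ} (s : Set (EuclideanSpace ℝ (Fin m)))
    (x μ : EuclideanSpace ℝ (Fin m)) : Prop :=
  μ ∈ s ∧ ∀ y ∈ s, dist x μ ≤ dist x y

/-- The quantity `τ(x; A, g) ∈ [0,∞]` associated with the system `(A,g)`, computed from the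
projection `μ* = μstar` and a reference active row `jb` with `A jb ≠ 0`:
`τ = min_j τ_j` with `τ_j = ‖a_{j̄}‖ (g_j − a_jᵀμ*) / (‖a_{j̄}‖‖a_j‖ − a_{j̄}ᵀa_j)` when
`‖a_{j̄}‖‖a_j‖ ≠ a_{j̄}ᵀa_j` and `τ_j = +∞` otherwise. -/
def tauFrom {ι : Type*} {m : ℕ} (A : ι → EuclideanSpace ℝ (Fin m)) (g : ι → ℝ)
    (μstar : EuclideanSpace ℝ (Fin m)) (jb : ι) : ℝ≥0∞ :=
  ⨅ j : ι, if ‖A jb‖ * ‖A j‖ = ⟪A jb, A j⟫ then (⊤ : ℝ≥0∞)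
    else ENNReal.ofReal (‖A jb‖ * (g j - ⟪A j, μstar⟫) / (‖A jb‖ * ‖A j‖ - ⟪A jb, A j⟫))

end

/-- The unit vector in the direction of the row `a` (zero when `a = 0`). -/
noncomputable def rowDir {m : ℕ} (a : EuclideanSpace ℝ (Fin m)) : EuclideanSpace ℝ (Fin m) :=
  ‖a‖⁻¹ • a

lemma norm_rowDir {m : ℕ} {a : EuclideanSpace ℝ (Fin m)} (ha : a ≠ 0) : ‖rowDir a‖ = 1 := by
  have h : ‖a‖ ≠ 0 := norm_ne_zero_iff.2 ha
  simp [rowDir, norm_smul, h]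

lemma norm_rowDir_le {m : ℕ} (a : EuclideanSpace ℝ (Fin m)) : ‖rowDir a‖ ≤ 1 := by
  by_cases ha : a = 0
  · simp [rowDir, ha]
  · exact (norm_rowDir ha).le

lemma inner_rowDir_self {m : ℕ} (a : EuclideanSpace ℝ (Fin m)) : ⟪a, rowDir a⟫ = ‖a‖ := by
  by_cases ha : a = 0
  · simp [ha]
  · have h : ‖a‖ ≠ 0 := norm_ne_zero_iff.2 ha
    rw [rowDir, real_inner_smul_right, real_inner_self_eq_norm_sq]
    field_simp

/-- The comparison `t ≤ τ_j` for a single row `a`, with all divisions cleared; the convention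
`τ_j = ∞` for rows parallel to the reference row `b` matches the vanishing of the left side. -/
lemma ofReal_le_row_iff {m : ℕ} {a b : EuclideanSpace ℝ (Fin m)} {t s : ℝ} (hb : b ≠ 0)
    (hs : 0 ≤ s) :
    ENNReal.ofReal t ≤ (if ‖b‖ * ‖a‖ = ⟪b, a⟫ then (⊤ : ℝ≥0∞)
      else ENNReal.ofReal (‖b‖ * s / (‖b‖ * ‖a‖ - ⟪b, a⟫))) ↔
      t * (‖a‖ - ⟪a, rowDir b⟫) ≤ s := by
  have hb' : 0 < ‖b‖ := norm_pos_iff.2 hb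
  have e : ‖a‖ - ⟪a, rowDir b⟫ = (‖b‖ * ‖a‖ - ⟪b, a⟫) / ‖b‖ := by
    rw [rowDir, real_inner_smul_right, real_inner_comm]
    field_simp
  rw [e]
  split_ifs with h
  · simp [h, hs]
  · have hD : 0 < ‖b‖ * ‖a‖ - ⟪b, a⟫ :=
      sub_pos.2 (lt_of_le_of_ne (real_inner_le_norm b a) (Ne.symm h))
    rw [ENNReal.ofReal_le_ofReal_iff (by positivity), le_div_iff₀ hD, ← mul_div_assoc,
      div_le_iff₀ hb', mul_comm s]

/-- Geometric meaning of `τ`: the right-hand side says that the closed ball of radius `t` centred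
at `μ - t u`, with `u` the direction of the reference row, is contained in the polyhedron. -/
lemma ofReal_le_tauFrom_iff {ι : Type*} {m : ℕ} {A : ι → EuclideanSpace ℝ (Fin m)} {g : ι → ℝ}
    {μ : EuclideanSpace ℝ (Fin m)} {jb : ι} {t : ℝ} (hμ : μ ∈ polyR A g) (hj : A jb ≠ 0)
    (ht : 0 ≤ t) :
    ENNReal.ofReal t ≤ tauFrom A g μ jb ↔
      ∀ v : EuclideanSpace ℝ (Fin m), ‖v‖ ≤ 1 → μ + t • (v - rowDir (A jb)) ∈ polyR A g := by
  have key : ENNReal.ofReal t ≤ tauFrom A g μ jb ↔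
      ∀ j, t * (‖A j‖ - ⟪A j, rowDir (A jb)⟫) ≤ g j - ⟪A j, μ⟫ := by
    rw [tauFrom, le_iInf_iff]
    exact forall_congr' fun j => ofReal_le_row_iff hj (sub_nonneg.2 (hμ j))
  rw [key]
  have e (j : ι) (v : EuclideanSpace ℝ (Fin m)) : ⟪A j, μ + t • (v - rowDir (A jb))⟫ =
      ⟪A j, μ⟫ + t * (⟪A j, v⟫ - ⟪A j, rowDir (A jb)⟫) := by
    rw [inner_add_right, real_inner_smul_right, inner_sub_right]
  constructor
  · intro H v hv j
    have h1 : ⟪A j, v⟫ ≤ ‖A j‖ :=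
      (real_inner_le_norm _ _).trans (mul_le_of_le_one_right (norm_nonneg _) hv)
    have h2 := mul_le_mul_of_nonneg_left (sub_le_sub_right h1 ⟪A j, rowDir (A jb)⟫) ht
    have h3 := H j
    rw [e]
    linarith
  · intro H j
    have h1 := H (rowDir (A j)) (norm_rowDir_le _) j
    rw [e, inner_rowDir_self] at h1
    linarith

/-- Invariance of `τ`, as one inequality. A ball of positive radius inside the polyhedron touching
`μ` forces the active row `C j` to have the direction of `A i`; after that, both sides are given by
the same inclusions of balls. -/
lemma tauFrom_le_of_polyR_eq {ι κ : Type*} {m : ℕ} {A : ι → EuclideanSpace ℝ (Fin m)} {g : ι → ℝ}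
    {C : κ → EuclideanSpace ℝ (Fin m)} {k : κ → ℝ} {μ : EuclideanSpace ℝ (Fin m)}
    (hP : polyR A g = polyR C k) (hμ : μ ∈ polyR A g) {i : ι} (hi0 : A i ≠ 0)
    {j : κ} (hj : ⟪C j, μ⟫ = k j) (hj0 : C j ≠ 0) :
    tauFrom A g μ i ≤ tauFrom C k μ j := by
  refine ENNReal.le_of_forall_nnreal_lt fun r hr => ?_
  rw [← ENNReal.ofReal_coe_nnreal] at hr ⊢
  rcases eq_or_lt_of_le r.coe_nonneg with h0 | hpos
  · simp [← h0]
  have hball := (ofReal_le_tauFrom_iff hμ hi0 r.coe_nonneg).1 hr.le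
  have hdir : rowDir (C j) = rowDir (A i) := by
    -- The point of the ball extremal for the active row `C j` forces `⟪u', u⟫ ≥ 1`.
    have h1 := hball (rowDir (C j)) (norm_rowDir_le _)
    rw [hP] at h1
    have h2 := h1 j
    rw [inner_add_right, real_inner_smul_right, inner_sub_right, hj, inner_rowDir_self] at h2
    have h3 : ‖C j‖ ≤ ⟪C j, rowDir (A i)⟫ := by
      by_contra! hlt
      have := mul_pos hpos (sub_pos.2 hlt)
      linarith
    have hn : 0 < ‖C j‖ := norm_pos_iff.2 hj0
    refine (inner_eq_one_iff_of_norm_eq_one (𝕜 := ℝ) (norm_rowDir hj0) (norm_rowDir hi0)).1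
      (le_antisymm ?_ ?_)
    · simpa [norm_rowDir hj0, norm_rowDir hi0] using
        real_inner_le_norm (rowDir (C j)) (rowDir (A i))
    · rw [rowDir.eq_1 (C j), real_inner_smul_left, inv_mul_eq_div, le_div_iff₀ hn]
      simpa using h3
  refine (ofReal_le_tauFrom_iff (hP ▸ hμ) hj0 r.coe_nonneg).2 ?_
  rwa [hdir, ← hP]

/-- A nonzero row is active at `μ` iff `μ` lies on the topological boundary of the polyhedron. -/
lemma exists_active_iff {ι : Type*} [Finite ι] {m : ℕ} {A : ι → EuclideanSpace ℝ (Fin m)}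
    {g : ι → ℝ} {μ : EuclideanSpace ℝ (Fin m)} (hμ : μ ∈ polyR A g) :
    (∃ j, ⟪A j, μ⟫ = g j ∧ A j ≠ 0) ↔ μ ∉ interior (polyR A g) := by
  constructor
  · rintro ⟨j, hj, hj0⟩ hint
    have hc : Continuous fun t : ℝ => μ + t • A j := by fun_prop
    have hev : ∀ᶠ t : ℝ in nhds 0, μ + t • A j ∈ polyR A g := by
      have : Filter.Tendsto (fun t : ℝ => μ + t • A j) (nhds 0) (nhds μ) := by
        simpa using hc.tendsto 0
      exact this (mem_interior_iff_mem_nhds.1 hint)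
    obtain ⟨ε, hε, hb⟩ := Metric.eventually_nhds_iff.1 hev
    have h1 := hb (y := ε / 2) (by
      rw [Real.dist_eq, sub_zero, abs_of_pos (by positivity)]; linarith) j
    rw [inner_add_right, real_inner_smul_right, hj, real_inner_self_eq_norm_sq] at h1
    have hn : 0 < ‖A j‖ := norm_pos_iff.2 hj0
    have : 0 < ε / 2 * ‖A j‖ ^ 2 := by positivity
    linarith
  · intro hint
    by_contra! H
    apply hint
    rw [mem_interior_iff_mem_nhds]
    have : ∀ᶠ y in nhds μ, ∀ j, ⟪A j, y⟫ ≤ g j := by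
      rw [Filter.eventually_all]
      intro j
      rcases eq_or_lt_of_le (hμ j) with h | h
      · have h0 := H j h
        rw [h0, inner_zero_left] at h
        exact Filter.Eventually.of_forall fun y => by rw [h0, inner_zero_left, h]
      · have hc : Continuous fun y : EuclideanSpace ℝ (Fin m) => ⟪A j, y⟫ := by fun_prop
        exact (hc.continuousAt.eventually_lt continuousAt_const h).mono fun y hy => hy.le
    exact this

lemma polyR_sumElim {ι κ : Type*} {m : ℕ} {A : ι → EuclideanSpace ℝ (Fin m)} {g : ι → ℝ}
    {B : κ → EuclideanSpace ℝ (Fin m)} {h : κ → ℝ} (hsub : polyR A g ⊆ polyR B h) :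
    polyR A g = polyR (Sum.elim A B) (Sum.elim g h) := by
  ext y
  constructor
  · rintro hy (j | j)
    · exact hy j
    · exact hsub hy j
  · exact fun hy j => hy (Sum.inl j)

/-- If `poly(A,g)` is nonempty and `poly(A,g) ⊆ poly(B,h)`, then for
every `x`, with `μ*` the common Euclidean projection of `x` onto
`poly(A,g) = poly([A;B],[g;h])`: a reference row exists for the system `(A,g)` iff one
exists for the stacked system `([A;B],[g;h])` (so in the degenerate case both values of
`τ` are `0`), and for every admissible choice of reference rows for the two systems the
corresponding values of `τ` coincide. -/
theorem statement18 {dA dB m : ℕ}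
    (A : Fin dA → EuclideanSpace ℝ (Fin m)) (g : Fin dA → ℝ)
    (B : Fin dB → EuclideanSpace ℝ (Fin m)) (h : Fin dB → ℝ)
    (hne : (polyR A g).Nonempty) (hsub : polyR A g ⊆ polyR B h)
    (x μstar : EuclideanSpace ℝ (Fin m)) (hμ : IsProjOn (polyR A g) x μstar) :
    ((∃ j, ⟪A j, μstar⟫ = g j ∧ A j ≠ 0) ↔
      (∃ j : Fin dA ⊕ Fin dB, ⟪Sum.elim A B j, μstar⟫ = Sum.elim g h j ∧
        Sum.elim A B j ≠ 0)) ∧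
    ∀ j₁ : Fin dA, ⟪A j₁, μstar⟫ = g j₁ → A j₁ ≠ 0 →
      ∀ j₂ : Fin dA ⊕ Fin dB, ⟪Sum.elim A B j₂, μstar⟫ = Sum.elim g h j₂ →
        Sum.elim A B j₂ ≠ 0 →
        tauFrom A g μstar j₁ = tauFrom (Sum.elim A B) (Sum.elim g h) μstar j₂ := by
  have hP := polyR_sumElim hsub
  have hm : μstar ∈ polyR A g := hμ.1
  have hm' : μstar ∈ polyR (Sum.elim A B) (Sum.elim g h) := hP ▸ hm
  refine ⟨?_, fun j₁ h₁ n₁ j₂ h₂ n₂ => le_antisymm ?_ ?_⟩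
  · rw [exists_active_iff hm, exists_active_iff hm', hP]
  · exact tauFrom_le_of_polyR_eq hP hm n₁ h₂ n₂
  · exact tauFrom_le_of_polyR_eq hP.symm hm' n₂ h₁ n₁
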